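/- arXiv:0805.2572 — 6 statements merged into one kernel-verified Lean document; each statement's English description precedes it below -/
import Mathlib

section
/- Let p be a prime and k an algebraically closed field of characteristic p. Then the map 𝕎 k → 𝕎 k sending x to frobenius(x) − x is surjective, where frobenius denotes the Witt vector Frobenius endomorphism of 𝕎 k. -/
/-!
Every Witt vector is `x = [x₀] + V x'`, with `V` the Verschiebung and `x'` the shifted vector. In
characteristic `p`, `V` commutes with the Frobenius `F`, hence with `F - 1`. Solving modulo `V`
therefore gives, for each `y`, a sequence `y₀ = y`, `yₙ = (F - 1) [cₙ] + V yₙ₊₁`. The Witt vector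
`x` with coefficients `cₙ` solves `(F - 1) x = y`: the errors `dₙ = yₙ - (F - 1) (x shifted by n)`
satisfy `dₙ = V dₙ₊₁`, so they vanish. Modulo `V`, the equation `(F - 1) x = y` is the
Artin–Schreier equation `c ^ p - c = y₀`, which is separable.
-/

open Function WittVector

section Verschiebung

variable {p : ℕ} [Fact p.Prime] {R : Type*} [CommRing R]

theorem wittVector_shift_eq_teichmuller_add_verschiebung (x : WittVector p R) (n : ℕ) :
    x.shift n = teichmuller p (x.coeff n) + verschiebung (x.shift (n + 1)) := by
  ext i
  have disjoint_coeff (j : ℕ) : (teichmuller p (x.coeff n)).coeff j = 0 ∨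
      (verschiebung (x.shift (n + 1))).coeff j = 0 := by
    cases j with
    | zero => exact .inr (verschiebung_coeff_zero _)
    | succ j => exact .inl (teichmuller_coeff_pos p _ _ j.succ_pos)
  rw [coeff_add_of_disjoint _ _ _ disjoint_coeff]
  cases i with
  | zero => simp [shift_coeff]
  | succ i => simp [shift_coeff, teichmuller_coeff_pos, add_assoc, add_comm 1 i]

theorem wittVector_eq_zero_of_forall_eq_verschiebung_succ {d : ℕ → WittVector p R}
    (hd : ∀ n, d n = verschiebung (d (n + 1))) (n : ℕ) : d n = 0 := by
  ext i
  rw [zero_coeff]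
  induction i generalizing n with
  | zero => rw [hd, verschiebung_coeff_zero]
  | succ i ih => rw [hd, verschiebung_coeff_succ, ih]

theorem wittVector_coeff_zero_eq_coeff_zero_teichmuller {f : WittVector p R →+ WittVector p R}
    (hf : Function.Commute f verschiebung) (x : WittVector p R) :
    (f x).coeff 0 = (f (teichmuller p (x.coeff 0))).coeff 0 := by
  have hx : x = teichmuller p (x.coeff 0) + verschiebung (x.shift 1) := by
    simpa [WittVector.ext_iff, shift_coeff] using
      wittVector_shift_eq_teichmuller_add_verschiebung x 0
  conv_lhs => rw [hx, map_add, hf.eq, add_coeff_zero, verschiebung_coeff_zero, add_zero]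

theorem wittVector_exists_eq_map_teichmuller_add_verschiebung
    {f : WittVector p R →+ WittVector p R} (hf : Function.Commute f verschiebung)
    (hf₀ : Surjective fun x => (f x).coeff 0) (y : WittVector p R) :
    ∃ c z, y = f (teichmuller p c) + verschiebung z := by
  obtain ⟨x, hx⟩ := hf₀ (y.coeff 0)
  have hcoeff : (y - f (teichmuller p (x.coeff 0))).coeff 0 = 0 := by
    rw [← constantCoeff_apply, map_sub, constantCoeff_apply, constantCoeff_apply,
      ← wittVector_coeff_zero_eq_coeff_zero_teichmuller hf, ← hx, sub_self]
  have hV := eq_iterate_verschiebung (n := 1) fun i hi => by rwa [Nat.lt_one_iff.mp hi]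
  exact ⟨x.coeff 0, _, sub_eq_iff_eq_add'.mp hV⟩

theorem wittVector_surjective_of_commute_verschiebung {f : WittVector p R →+ WittVector p R}
    (hf : Function.Commute f verschiebung) (hf₀ : Surjective fun x => (f x).coeff 0) :
    Surjective f := by
  intro y₀
  choose c rest hrest using wittVector_exists_eq_map_teichmuller_add_verschiebung hf hf₀
  let y (n : ℕ) : WittVector p R := rest^[n] y₀
  let x : WittVector p R := WittVector.mk p fun n => c (y n)
  have error_eq (n : ℕ) :
      y n - f (x.shift n) = verschiebung (y (n + 1) - f (x.shift (n + 1))) := by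
    calc y n - f (x.shift n)
        = (f (teichmuller p (c (y n))) + verschiebung (rest (y n))) -
            (f (teichmuller p (c (y n))) + f (verschiebung (x.shift (n + 1)))) := by
          rw [← hrest, wittVector_shift_eq_teichmuller_add_verschiebung, map_add, coeff_mk]
      _ = verschiebung (y (n + 1) - f (x.shift (n + 1))) := by
          rw [hf.eq, add_sub_add_left_eq_sub, ← map_sub, ← iterate_succ_apply' rest]
  have error_eq_zero := wittVector_eq_zero_of_forall_eq_verschiebung_succ error_eq 0
  exact ⟨x.shift 0, (sub_eq_zero.mp error_eq_zero).symm⟩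

end Verschiebung

theorem surjective_pow_sub_self_of_isSepClosed (p : ℕ) [Fact p.Prime] (k : Type*) [Field k]
    [CharP k p] [IsSepClosed k] : Surjective fun c : k => c ^ p - c := by
  intro a
  obtain ⟨c, hc⟩ := IsSepClosed.exists_root_C_mul_X_pow_add_C_mul_X_add_C' p p 1 (-1) (-a)
    dvd_rfl (Fact.out : p.Prime).two_le (neg_ne_zero.mpr one_ne_zero)
  exact ⟨c, by linear_combination hc⟩

theorem wittVector_frobenius_sub_id_surjective_general (p : ℕ) [Fact p.Prime] (R : Type*)
    [CommRing R] [CharP R p] (hR : Surjective fun c : R => c ^ p - c) :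
    Surjective fun x : WittVector p R => frobenius x - x := by
  let f : WittVector p R →+ WittVector p R := frobenius.toAddMonoidHom - AddMonoidHom.id _
  have commute_verschiebung : Function.Commute f verschiebung := fun x => by
    simp [f, (verschiebung_frobenius_comm (p := p) (R := R)).eq x]
  have coeff_zero (x : WittVector p R) : (f x).coeff 0 = x.coeff 0 ^ p - x.coeff 0 := by
    rw [← coeff_frobenius_charP]
    exact map_sub constantCoeff (frobenius x) x
  refine wittVector_surjective_of_commute_verschiebung commute_verschiebung ?_
  simp only [coeff_zero]
  exact hR.comp (constantCoeff_surjective p)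

/-- **Artin–Schreier–Witt surjectivity.** For a prime `p` and an algebraically closed
field `k` of characteristic `p`, the map `x ↦ frobenius x - x` on the ring `𝕎 k` of
`p`-typical Witt vectors is surjective. -/
theorem wittVector_frobenius_sub_id_surjective
    (p : ℕ) [Fact p.Prime] (k : Type*) [Field k] [CharP k p] [IsAlgClosed k] :
    Function.Surjective (fun x : WittVector p k => WittVector.frobenius x - x) :=
  wittVector_frobenius_sub_id_surjective_general p k (surjective_pow_sub_self_of_isSepClosed p k)
end

section
/- Let p be a prime, k an algebraically closed field of characteristic p, F = FractionRing(𝕎 k) the fraction field of the p-typical Witt vectors of k, and σ : F ≃+* F the automorphism induced by the Witt vector Frobenius. Let E be a finite-dimensional F-vector space and Φ : E → E an additive bijection satisfying Φ(c • v) = σ(c) • Φ(v) for all c ∈ F, v ∈ E. Suppose D ⊆ E is an F-subspace with Φ(D) ⊆ D such that the quotient E/D is one-dimensional and the map induced by Φ on E/D fixes some nonzero vector. Then there exists e ∈ E with Φ(e) = e and e ∉ D. -/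
open WittVector

/-!
Write `Φ v₀ - v₀ = w ∈ D`; it suffices to write `w` as `Φ v - v` with `v ∈ D`. Since `D` is
finite-dimensional, `∑ cᵢ Φⁱ w = 0` for some scalars `cᵢ`, not all zero. Modulo the image of
`Φ - 1` one has `u • w ≡ Φⁱ (u • w) = σⁱ(u) • Φⁱ w`. Hence if `∑ uᵢ = 1` and `σⁱ(uᵢ) = y cᵢ` for a
common scalar `y`, then `w = ∑ uᵢ • w ≡ y • ∑ cᵢ Φⁱ w = 0`. Finding such a `y` amounts to solving
`∑ aⱼ σʲ(z) = 1` in `F`, where the `aⱼ` are not all zero. After scaling, the `aⱼ` are Witt vectors,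
one of them equal to `1`, and successive approximation reduces the equation to the residue field,
where it reads `∑ āⱼ z ^ pʲ = s̄` and is solvable because `k` is algebraically closed.
-/

section TwistedPolynomial

/-- The additive map `y ↦ ∑ aᵢ σⁱ(y)` by which the twisted polynomial `∑ aᵢ Xⁱ`, an element of the
skew polynomial ring over `R` with `X r = σ(r) X`, acts on `R`. The coefficients are encoded as a
tuple, so the degree is less than `n` and zero leading coefficients are allowed. -/
def twistedPolynomialMap {R : Type*} [Semiring R] (σ : R →+* R) {n : ℕ} (a : Fin n → R) :
    R →+ R where
  toFun y := ∑ i, a i * σ^[i] y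
  map_zero' := by simp [iterate_map_zero]
  map_add' x y := by simp [iterate_map_add, mul_add, Finset.sum_add_distrib]

theorem twistedPolynomialMap_apply {R : Type*} [Semiring R] (σ : R →+* R) {n : ℕ} (a : Fin n → R)
    (y : R) : twistedPolynomialMap σ a y = ∑ i, a i * σ^[i] y :=
  rfl

theorem twistedPolynomialMap_smul {R : Type*} [Semiring R] (σ : R →+* R) {n : ℕ} (d : R)
    (a : Fin n → R) (y : R) :
    twistedPolynomialMap σ (d • a) y = d * twistedPolynomialMap σ a y := by
  simp [twistedPolynomialMap_apply, Finset.mul_sum, mul_assoc]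

theorem map_twistedPolynomialMap {R S : Type*} [Semiring R] [Semiring S] {σ : R →+* R}
    {τ : S →+* S} {f : R →+* S} (hf : Function.Semiconj f σ τ) {n : ℕ} (a : Fin n → R) (y : R) :
    f (twistedPolynomialMap σ a y) = twistedPolynomialMap τ (f ∘ a) (f y) := by
  simp [twistedPolynomialMap_apply, fun i : ℕ => (hf.iterate_right i).eq]

theorem twistedPolynomialMap_frobenius_surjective {k : Type*} [Field k] [IsAlgClosed k] {p : ℕ}
    [Fact p.Prime] [CharP k p] {n : ℕ} {a : Fin n → k} (ha : a ≠ 0) :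
    Function.Surjective (twistedPolynomialMap (frobenius k p) a) := by
  obtain ⟨j, hj⟩ := Function.ne_iff.1 ha
  let P : Polynomial k := ∑ i, Polynomial.C (a i) * Polynomial.X ^ p ^ (i : ℕ)
  have hcoeff : P.coeff (p ^ (j : ℕ)) = a j := by
    simp [P, Polynomial.coeff_X_pow, Nat.pow_right_inj (Fact.out : p.Prime).one_lt, Fin.val_inj]
  have hdeg : P.natDegree ≠ 0 := by
    have hle : p ^ (j : ℕ) ≤ P.natDegree := Polynomial.le_natDegree_of_ne_zero (hcoeff ▸ hj)
    exact ((pow_pos (Fact.out : p.Prime).pos _).trans_le hle).ne'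
  intro t
  obtain ⟨y, hy⟩ := IsAlgClosed.eval_surjective hdeg t
  refine ⟨y, ?_⟩
  simpa [P, Polynomial.eval_finsetSum, twistedPolynomialMap_apply, iterate_frobenius] using hy

theorem twistedPolynomialMap_surjective_of_residue {R κ : Type*} [CommRing R] [CommRing κ] (q : ℕ)
    [IsAdicComplete (Ideal.span {(q : R)}) R] {σ : R →+* R} {τ : κ →+* κ} {π : R →+* κ}
    (hπ : Function.Surjective π) (hker : RingHom.ker π = Ideal.span {(q : R)})
    (hσ : Function.Semiconj π σ τ) {n : ℕ} {a : Fin n → R}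
    (ha : Function.Surjective (twistedPolynomialMap τ (π ∘ a))) :
    Function.Surjective (twistedPolynomialMap σ a) := by
  -- The map is not `R`-linear, but it is `ℤ`-linear and the ideal comes from `ℤ`.
  let I : Ideal ℤ := Ideal.span {(q : ℤ)}
  have hmap : I.map (algebraMap ℤ R) = Ideal.span {(q : R)} := by simp [I, Ideal.map_span]
  have : IsAdicComplete I R := by
    rwa [← IsAdicComplete.map_algebraMap_iff (S := R), hmap]
  suffices Function.Surjective
      ((I • (⊤ : Submodule ℤ R)).mkQ ∘ₗ (twistedPolynomialMap σ a).toIntLinearMap) from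
    surjective_of_mkQ_comp_surjective this
  intro t
  obtain ⟨t, rfl⟩ := Submodule.mkQ_surjective _ t
  obtain ⟨z, hz⟩ := ha (π t)
  obtain ⟨y, rfl⟩ := hπ z
  rw [← map_twistedPolynomialMap hσ] at hz
  refine ⟨y, (Submodule.Quotient.eq _).2 ?_⟩
  rw [Ideal.smul_top_eq_map, hmap, ← hker]
  exact (RingHom.sub_mem_ker_iff π).2 hz

end TwistedPolynomial

theorem exists_eq_smul_algebraMap_of_ne_zero (R : Type*) {K ι : Type*} [CommRing R] [IsDomain R]
    [ValuationRing R] [Field K] [Algebra R K] [IsFractionRing R K] [Finite ι] {c : ι → K}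
    (hc : c ≠ 0) :
    ∃ d : K, d ≠ 0 ∧ ∃ b : ι → R, (∃ l, b l = 1) ∧ c = d • (algebraMap R K ∘ b) := by
  obtain ⟨j, hj⟩ := Function.ne_iff.1 hc
  have : Nonempty ι := ⟨j⟩
  obtain ⟨l, hl⟩ := Finite.exists_max fun i => ValuationRing.valuation R K (c i)
  have hcl : c l ≠ 0 := by
    intro h
    have hle := hl j
    rw [h, map_zero, le_zero_iff, map_eq_zero] at hle
    exact hj hle
  have hint (i : ι) : ∃ b : R, algebraMap R K b = c i / c l := by
    refine (ValuationRing.mem_integer_iff R K _).1 ?_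
    rw [Valuation.mem_integer_iff, map_div₀]
    exact div_le_one_of_le₀ (hl i) zero_le
  choose b hb using hint
  refine ⟨c l, hcl, b, ⟨l, IsFractionRing.injective R K ?_⟩, funext fun i => ?_⟩
  · rw [hb, div_self hcl, map_one]
  · simp [hb, mul_div_cancel₀, hcl]

section WittVector

open scoped Isocrystal

variable {p : ℕ} [Fact p.Prime] {k : Type*} [Field k] [CharP k p]

theorem exists_p_pow_mul_eq_algebraMap [PerfectRing k p] (x : K(p, k)) :
    ∃ (m : ℕ) (s : WittVector p k),
      (p : K(p, k)) ^ m * x = algebraMap (WittVector p k) K(p, k) s := by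
  obtain ⟨r, q, hq, rfl⟩ := IsFractionRing.div_surjective (A := WittVector p k) x
  obtain ⟨m, u, hu⟩ := WittVector.exists_eq_pow_p_mul' q (nonZeroDivisors.ne_zero hq)
  have hp : (p : WittVector p k) ^ m = q * ↑u⁻¹ := (Units.eq_mul_inv_iff_mul_eq u).2 hu.symm
  have hq' : algebraMap (WittVector p k) K(p, k) q ≠ 0 := by
    simpa using nonZeroDivisors.ne_zero hq
  refine ⟨m, r * ↑u⁻¹, ?_⟩
  rw [← map_natCast (algebraMap (WittVector p k) K(p, k)), ← map_pow, hp, map_mul, map_mul]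
  field_simp

theorem semiconj_algebraMap_frobenius [PerfectRing k p] :
    Function.Semiconj (algebraMap (WittVector p k) K(p, k)) WittVector.frobenius φ(p, k) :=
  fun x => (IsFractionRing.ringEquivOfRingEquiv_algebraMap (WittVector.frobeniusEquiv p k) x).symm

theorem semiconj_constantCoeff_frobenius :
    Function.Semiconj (WittVector.constantCoeff : WittVector p k →+* k) WittVector.frobenius
      (frobenius k p) :=
  fun x => WittVector.coeff_frobenius_charP p x 0

variable [IsAlgClosed k]

theorem twistedPolynomialMap_wittVector_surjective {n : ℕ} {a : Fin n → WittVector p k} {j : Fin n}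
    (ha : (a j).coeff 0 ≠ 0) :
    Function.Surjective (twistedPolynomialMap WittVector.frobenius a) :=
  twistedPolynomialMap_surjective_of_residue p
    (WittVector.constantCoeff_surjective p) WittVector.ker_constantCoeff
    semiconj_constantCoeff_frobenius
    (twistedPolynomialMap_frobenius_surjective (Function.ne_iff.2 ⟨j, ha⟩))

theorem twistedPolynomialMap_fractionRing_surjective {n : ℕ} {c : Fin n → K(p, k)} (hc : c ≠ 0) :
    Function.Surjective (twistedPolynomialMap φ(p, k) c) := by
  intro t
  obtain ⟨d, hd, b, ⟨l, hl⟩, rfl⟩ := exists_eq_smul_algebraMap_of_ne_zero (WittVector p k) hc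
  obtain ⟨m, s, hs⟩ := exists_p_pow_mul_eq_algebraMap (t / d)
  obtain ⟨y, rfl⟩ := twistedPolynomialMap_wittVector_surjective (a := b) (j := l) (by simp [hl]) s
  set L := twistedPolynomialMap φ(p, k) (d • (algebraMap (WittVector p k) K(p, k) ∘ b))
  have hp : (p : K(p, k)) ^ m ≠ 0 := pow_ne_zero m (WittVector.FractionRing.p_nonzero p k)
  have hL : L (algebraMap (WittVector p k) K(p, k) y) = (p : K(p, k)) ^ m * t := by
    rw [twistedPolynomialMap_smul, ← map_twistedPolynomialMap semiconj_algebraMap_frobenius, ← hs]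
    field_simp
  refine ⟨algebraMap (WittVector p k) K(p, k) y / p ^ m, mul_left_cancel₀ hp ?_⟩
  calc (p : K(p, k)) ^ m * L (algebraMap (WittVector p k) K(p, k) y / p ^ m)
      = L (p ^ m * (algebraMap (WittVector p k) K(p, k) y / p ^ m)) := by
        simpa using (map_nsmul L (p ^ m) (algebraMap (WittVector p k) K(p, k) y / p ^ m)).symm
    _ = p ^ m * t := by rw [mul_div_cancel₀ _ hp, hL]

end WittVector

section Semilinear

theorem iterate_sub_self_mem_range_sub_id {A : Type*} [AddCommGroup A] (f : A →+ A) (i : ℕ)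
    (x : A) : f^[i] x - x ∈ (f - AddMonoidHom.id A).range := by
  induction i with
  | zero => simp
  | succ i ih =>
    rw [Function.iterate_succ_apply', ← sub_add_sub_cancel _ (f^[i] x)]
    exact add_mem ⟨f^[i] x, rfl⟩ ih

theorem semilinear_iterate_smul {R M : Type*} [Semiring R] [AddCommMonoid M] [Module R M]
    {σ : R →+* R} (f : M →ₛₗ[σ] M) (i : ℕ) (c : R) (x : M) :
    f^[i] (c • x) = σ^[i] c • f^[i] x := by
  induction i with
  | zero => rfl
  | succ i ih => simp only [Function.iterate_succ_apply', ih, map_smulₛₗ]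

theorem exists_ne_zero_sum_smul_eq_zero (F : Type*) {V : Type*} [Ring F] [StrongRankCondition F]
    [AddCommGroup V] [Module F V] [Module.Finite F V] (x : ℕ → V) :
    ∃ (n : ℕ) (c : Fin n → F), c ≠ 0 ∧ ∑ i, c i • x i = 0 := by
  have hdep : ¬ LinearIndependent F fun i : Fin (Module.finrank F V + 1) => x i := fun h => by
    simpa using h.fintype_card_le_finrank
  obtain ⟨c, hc, i, hi⟩ := Fintype.not_linearIndependent_iff.1 hdep
  exact ⟨_, c, Function.ne_iff.2 ⟨i, hi⟩, hc⟩

theorem semilinear_sub_id_surjective {F V : Type*} [Field F] [AddCommGroup V] [Module F V]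
    [FiniteDimensional F V] {σ : F →+* F} (hσ : Function.Surjective σ)
    (hpoly : ∀ {n : ℕ} {a : Fin n → F}, a ≠ 0 → Function.Surjective (twistedPolynomialMap σ a))
    (Φ : V →ₛₗ[σ] V) : Function.Surjective fun v => Φ v - v := by
  intro w
  obtain ⟨n, c, hc, hrel⟩ := exists_ne_zero_sum_smul_eq_zero F fun i => Φ^[i] w
  choose a ha using fun j : Fin n => hσ.iterate j.rev (c j.rev)
  have ha_ne : a ≠ 0 := by
    rintro rfl
    exact hc (funext fun i => by simpa [iterate_map_zero] using (ha i.rev).symm)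
  obtain ⟨z, hz⟩ := hpoly ha_ne 1
  have hsum : ∑ j : Fin n, Φ^[j.rev] ((a j * σ^[j] z) • w) = 0 := by
    have hterm (j : Fin n) : Φ^[j.rev] ((a j * σ^[j] z) • w) =
        σ^[n - 1] z • c j.rev • Φ^[j.rev] w := by
      have hdeg : (j.rev : ℕ) + j = n - 1 := by
        rw [Fin.val_rev]
        omega
      rw [semilinear_iterate_smul, iterate_map_mul, ha, ← Function.iterate_add_apply, hdeg,
        mul_comm, mul_smul]
    have hrel_rev : ∑ j : Fin n, c j.rev • Φ^[j.rev] w = 0 :=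
      (Equiv.sum_comp Fin.revPerm fun i => c i • Φ^[i] w).trans hrel
    rw [Finset.sum_congr rfl fun j _ => hterm j, ← Finset.smul_sum, hrel_rev, smul_zero]
  have hw : -w = ∑ j : Fin n,
      (Φ^[j.rev] ((a j * σ^[j] z) • w) - (a j * σ^[j] z) • w) := by
    rw [Finset.sum_sub_distrib, hsum, ← Finset.sum_smul, ← twistedPolynomialMap_apply, hz]
    simp
  have hmem : w ∈ (Φ.toAddMonoidHom - AddMonoidHom.id V).range := by
    rw [← neg_mem_iff, hw]
    exact sum_mem fun j _ => iterate_sub_self_mem_range_sub_id Φ.toAddMonoidHom _ _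
  exact hmem

end Semilinear

open scoped Isocrystal in
theorem phi_module_extension_of_unit_splits_general {p : ℕ} [Fact p.Prime] {k : Type*} [Field k]
    [CharP k p] [IsAlgClosed k] {E : Type*} [AddCommGroup E] [Module K(p, k) E] (Φ : E →ᶠˡ[p, k] E)
    {D : Submodule K(p, k) E} [FiniteDimensional K(p, k) D] (hD : ∀ v ∈ D, Φ v ∈ D) {v : E}
    (hv : Φ v - v ∈ D) : ∃ e : E, Φ e = e ∧ e - v ∈ D := by
  obtain ⟨d, hd⟩ := semilinear_sub_id_surjective (WittVector.FractionRing.frobenius p k).surjective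
    twistedPolynomialMap_fractionRing_surjective (Φ.restrict hD) ⟨Φ v - v, hv⟩
  have hd' : Φ d - d = Φ v - v := congrArg Subtype.val hd
  refine ⟨v - d, ?_, by simp⟩
  rw [map_sub, sub_eq_sub_iff_sub_eq_sub, hd']

/-- Every extension of the unit `φ`-module splits: if `k` is algebraically closed of
characteristic `p`, `F = FractionRing (𝕎 k)`, `σ` the automorphism of `F` induced by the
Witt vector Frobenius, `E` a finite-dimensional `F`-vector space with an additive bijection
`Φ` satisfying `Φ (c • v) = σ c • Φ v`, and `D ⊆ E` a `Φ`-stable subspace with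
one-dimensional quotient on which the induced map fixes a nonzero vector, then there is a
`Φ`-fixed vector of `E` outside `D`. -/
theorem phi_module_extension_of_unit_splits
    (p : ℕ) [Fact p.Prime] (k : Type*) [Field k] [CharP k p] [IsAlgClosed k]
    (σ : FractionRing (WittVector p k) ≃+* FractionRing (WittVector p k))
    (hσ : σ = WittVector.FractionRing.frobenius p k)
    (E : Type*) [AddCommGroup E] [Module (FractionRing (WittVector p k)) E]
    [FiniteDimensional (FractionRing (WittVector p k)) E]
    (Φ : E ≃+ E)
    (hΦ : ∀ (c : FractionRing (WittVector p k)) (v : E), Φ (c • v) = σ c • Φ v)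
    (D : Submodule (FractionRing (WittVector p k)) E)
    (hD : ∀ v ∈ D, Φ v ∈ D)
    (hquot : Module.finrank (FractionRing (WittVector p k)) (E ⧸ D) = 1)
    (hfix : ∃ v : E, v ∉ D ∧ Φ v - v ∈ D) :
    ∃ e : E, Φ e = e ∧ e ∉ D := by
  subst hσ
  obtain ⟨v, hvD, hv⟩ := hfix
  obtain ⟨e, he, hev⟩ := phi_module_extension_of_unit_splits_general ⟨Φ.toAddHom, hΦ⟩ hD hv
  exact ⟨e, he, fun heD => hvD ((D.sub_mem_iff_right heD).1 hev)⟩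
end

section
/- Let p be a prime, k an algebraically closed field of characteristic p, F = FractionRing(𝕎 k), and σ : F ≃+* F the automorphism induced by the Witt vector Frobenius. Let E be a finite-dimensional F-vector space and Φ : E → E an additive bijection satisfying Φ(c • v) = σ(c) • Φ(v) for all c ∈ F, v ∈ E. Then every F-subspace D ⊆ E with Φ(D) ⊆ D admits a Φ-stable complement: there is an F-subspace D' ⊆ E with Φ(D') ⊆ D', D ∩ D' = 0, and D + D' = E. -/
open WittVector

/-!
Over `F = Frac (𝕎 k)` every nonzero twisted polynomial `∑ aᵢ σⁱ` is surjective: on `k` this is the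
existence of roots of additive polynomials, it lifts to `𝕎 k` by `p`-adic approximation, and it
passes to `F` by clearing denominators.  Consequently `ψ - 1` is surjective on every
finite-dimensional space with a `σ⁻¹`-semilinear `ψ`: a linear relation `∑ cᵢ ψⁱ y = 0` gives
`∑ (ψⁱ - 1) (uᵢ y) = -y` for `uᵢ = σⁱ (cᵢ w)`, where `w` solves `∑ σⁱ (cᵢ) σⁱ (w) = 1`.
Applied to `ψ f = φ⁻¹ ∘ f ∘ Φ` on `Hom (E / D, D)`, where `φ = Φ|_D`, this corrects any linear
projection `E → D` to one commuting with `Φ`, whose kernel is the complement.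
-/

open Function

section DifferenceOperator

variable {R S : Type*} [Semiring R] [Semiring S] {n : ℕ}

/-- The linear difference operator `∑ᵢ aᵢ σⁱ` of order less than `n` on a ring with an
endomorphism `σ`, i.e. the action of a twisted polynomial in `σ`. -/
def differenceOperator (σ : R →+* R) (a : Fin n → R) (x : R) : R :=
  ∑ i, a i * σ^[i] x

/-- A ring with an endomorphism `σ` is linear difference closed if each inhomogeneous linear
difference equation `∑ᵢ aᵢ σⁱ x = y` with nonzero left-hand side is solvable. -/
def IsLinearDifferenceClosed (σ : R →+* R) : Prop :=
  ∀ ⦃n : ℕ⦄ (a : Fin n → R), a ≠ 0 → Surjective (differenceOperator σ a)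

theorem IsLinearDifferenceClosed.surjective [Nontrivial R] {σ : R →+* R}
    (hσ : IsLinearDifferenceClosed σ) : Surjective σ := by
  intro y
  obtain ⟨x, hx⟩ := hσ ![0, 1] (by simp) y
  exact ⟨x, by simpa [differenceOperator] using hx⟩

theorem map_differenceOperator {σ : R →+* R} {τ : S →+* S} (f : R →+* S) (hf : Semiconj f σ τ)
    (a : Fin n → R) (x : R) :
    f (differenceOperator σ a x) = differenceOperator τ (f ∘ a) (f x) := by
  simp only [differenceOperator, map_sum, map_mul, comp_apply, (hf.iterate_right _).eq]

theorem differenceOperator_smul (σ : R →+* R) (c : R) (a : Fin n → R) (x : R) :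
    differenceOperator σ (c • a) x = c * differenceOperator σ a x := by
  simp only [differenceOperator, Pi.smul_apply, smul_eq_mul, mul_assoc, Finset.mul_sum]

theorem differenceOperator_mul_of_fixed {σ : R →+* R} {z : R} (hz : σ z = z) (a : Fin n → R)
    (x : R) : differenceOperator σ a (x * z) = differenceOperator σ a x * z := by
  simp only [differenceOperator, iterate_map_mul, iterate_fixed hz, Finset.sum_mul, mul_assoc]

theorem differenceOperator_surjective_of_residue {A R S : Type*} [CommRing A] [CommRing R]
    [Algebra A R] [Ring S] (I : Ideal A) [IsAdicComplete I R] (σ : R →ₐ[A] R) {τ : S →+* S}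
    {π : R →+* S} (hπ : Surjective π) (hker : RingHom.ker π ≤ I.map (algebraMap A R))
    (hστ : Semiconj π σ τ) {a : Fin n → R} (ha : Surjective (differenceOperator τ (π ∘ a))) :
    Surjective (differenceOperator (σ : R →+* R) a) := by
  let P : R →ₗ[A] R := ∑ i, LinearMap.mulLeft A (a i) ∘ₗ (σ ^ (i : ℕ)).toLinearMap
  have hP : ⇑P = differenceOperator (σ : R →+* R) a := by
    ext x
    simp [P, differenceOperator, AlgHom.coe_pow]
  rw [← hP]
  refine surjective_of_mkQ_comp_surjective (I := I) fun q ↦ ?_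
  obtain ⟨y, rfl⟩ := Submodule.mkQ_surjective _ q
  obtain ⟨s, hs⟩ := ha (π y)
  obtain ⟨x, rfl⟩ := hπ s
  refine ⟨x, (Submodule.Quotient.eq _).mpr ?_⟩
  rw [Ideal.smul_top_eq_map, hP]
  refine hker ?_
  rw [RingHom.mem_ker, map_sub, map_differenceOperator (σ := σ) π hστ, hs, sub_self]

end DifferenceOperator

theorem isLinearDifferenceClosed_frobenius_of_isAlgClosed (k : Type*) [Field k] [IsAlgClosed k]
    (p : ℕ) [Fact p.Prime] [CharP k p] : IsLinearDifferenceClosed (frobenius k p) := by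
  intro n a ha y
  have hp : 1 < p := (Fact.out : p.Prime).one_lt
  obtain ⟨j, hj⟩ := ne_iff.mp ha
  let Q : Polynomial k := ∑ i, Polynomial.C (a i) * Polynomial.X ^ p ^ (i : ℕ) - Polynomial.C y
  have hpj : p ^ (j : ℕ) ≠ 0 := pow_ne_zero _ (by lia)
  have hQj : Q.coeff (p ^ (j : ℕ)) = a j := by
    simp [Q, Polynomial.coeff_C_of_ne_zero hpj, (Nat.pow_right_injective hp).eq_iff, Fin.val_inj]
  have hdeg : Q.degree ≠ 0 := fun h ↦ hj <| by
    rw [← hQj, Polynomial.coeff_eq_zero_of_degree_lt, Pi.zero_apply]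
    rw [h]
    exact_mod_cast Nat.pos_of_ne_zero hpj
  obtain ⟨x, hx⟩ := IsAlgClosed.exists_root Q hdeg
  refine ⟨x, sub_eq_zero.mp ?_⟩
  simpa [Q, differenceOperator, Polynomial.IsRoot, Polynomial.eval_finsetSum,
    iterate_frobenius] using hx

section FractionField

variable {R K : Type*} [CommRing R] [IsDomain R] [ValuationRing R] [Field K] [Algebra R K]
  [IsFractionRing R K]

theorem exists_eq_smul_algebraMap_comp {ι : Type*} [Finite ι] {b : ι → K} (hb : b ≠ 0) :
    ∃ j, b j ≠ 0 ∧ ∃ a : ι → R, a j = 1 ∧ b = b j • (algebraMap R K ∘ a) := by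
  let v := ValuationRing.valuation R K
  obtain ⟨i₀, hi₀⟩ := ne_iff.mp hb
  have : Nonempty ι := ⟨i₀⟩
  obtain ⟨j, hj⟩ := Finite.exists_max fun i ↦ v (b i)
  have hbj : b j ≠ 0 := fun h ↦ hi₀ <| by simpa [h] using hj i₀
  have hinteger (i : ι) : ∃ r : R, algebraMap R K r = b i / b j := by
    rw [← ValuationRing.mem_integer_iff, Valuation.mem_integer_iff, map_div₀]
    exact div_le_one_of_le₀ (hj i) zero_le
  choose a ha using hinteger
  refine ⟨j, hbj, a, IsFractionRing.injective R K ?_, funext fun i ↦ ?_⟩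
  · rw [ha, div_self hbj, map_one]
  · rw [Pi.smul_apply, comp_apply, ha, smul_eq_mul, mul_div_cancel₀ _ hbj]

theorem IsLinearDifferenceClosed.of_isFractionRing {σ : R →+* R} {τ : K →+* K}
    (hστ : Semiconj (algebraMap R K) σ τ) (hfixed : ∀ d : R, d ≠ 0 → ∃ r ≠ 0, d ∣ r ∧ σ r = r)
    (hσ : ∀ ⦃n : ℕ⦄ (a : Fin n → R), (∃ j, IsUnit (a j)) → Surjective (differenceOperator σ a)) :
    IsLinearDifferenceClosed τ := by
  intro n b hb y
  obtain ⟨j, hbj, a, haj, hab⟩ := exists_eq_smul_algebraMap_comp (R := R) hb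
  obtain ⟨u, d, hd, hud⟩ := IsFractionRing.div_surjective (A := R) (y / b j)
  obtain ⟨r, hr, ⟨c, rfl⟩, hσr⟩ := hfixed d (nonZeroDivisors.ne_zero hd)
  obtain ⟨x, hx⟩ := hσ a ⟨j, haj ▸ isUnit_one⟩ (u * c)
  have hτr : τ (algebraMap R K (d * c))⁻¹ = (algebraMap R K (d * c))⁻¹ := by
    rw [map_inv₀, ← hστ, hσr]
  refine ⟨algebraMap R K x * (algebraMap R K (d * c))⁻¹, ?_⟩
  have hc : algebraMap R K c ≠ 0 := by
    simpa using right_ne_zero_of_mul hr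
  rw [differenceOperator_mul_of_fixed hτr, hab, differenceOperator_smul,
    ← map_differenceOperator _ hστ, hx, map_mul, map_mul, mul_assoc, ← div_eq_mul_inv,
    mul_div_mul_right _ _ hc, hud, mul_div_cancel₀ _ hbj]

end FractionField

section WittVector

variable {p : ℕ} [Fact p.Prime] {k : Type*} [Field k] [CharP k p] [PerfectRing k p]

theorem IsLinearDifferenceClosed.differenceOperator_wittVector_surjective
    (hk : IsLinearDifferenceClosed (frobenius k p)) {n : ℕ} {a : Fin n → WittVector p k}
    (ha : ∃ j, IsUnit (a j)) :
    Surjective (differenceOperator (WittVector.frobenius : WittVector p k →+* _) a) := by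
  obtain ⟨j, hj⟩ := ha
  have hmap : (Ideal.span {(p : ℤ)}).map (algebraMap ℤ (WittVector p k)) = Ideal.span {↑p} := by
    simp [Ideal.map_span]
  have : IsAdicComplete (Ideal.span {(p : ℤ)}) (WittVector p k) := by
    rw [← IsAdicComplete.map_algebraMap_iff (S := WittVector p k), hmap]
    infer_instance
  exact differenceOperator_surjective_of_residue (τ := _root_.frobenius k p)
    (Ideal.span {(p : ℤ)}) (WittVector.frobenius : WittVector p k →+* _).toIntAlgHom
    (constantCoeff_surjective p) (by rw [hmap, ker_constantCoeff])
    (fun x ↦ coeff_frobenius_charP p x 0)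
    (hk _ (ne_iff.mpr ⟨j, (hj.map constantCoeff).ne_zero⟩))

theorem IsLinearDifferenceClosed.fractionRing_wittVector
    (hk : IsLinearDifferenceClosed (frobenius k p)) :
    IsLinearDifferenceClosed (FractionRing.frobeniusRingHom p k) := by
  refine .of_isFractionRing (σ := (WittVector.frobenius : WittVector p k →+* _)) (fun x ↦ ?_)
    (fun d hd ↦ ?_) fun n a ↦ hk.differenceOperator_wittVector_surjective
  · exact (IsFractionRing.ringEquivOfRingEquiv_algebraMap (frobeniusEquiv p k) x).symm
  · obtain ⟨m, u, rfl⟩ := exists_eq_pow_p_mul' d hd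
    exact ⟨p ^ m, pow_ne_zero _ (p_nonzero p k), (Units.mul_right_dvd).mpr dvd_rfl, by simp⟩

end WittVector

section Semilinear

theorem iterate_map_smul_semilinear {R V : Type*} [Semiring R] [AddCommMonoid V] [Module R V]
    {σ : R →+* R} (Φ : V →ₛₗ[σ] V) (n : ℕ) (c : R) (v : V) :
    Φ^[n] (c • v) = σ^[n] c • Φ^[n] v := by
  induction n generalizing c v with
  | zero => rfl
  | succ n ih => simp only [iterate_succ_apply, map_smulₛₗ, ih]

theorem iterate_sub_mem_range_sub_id {V : Type*} [AddCommGroup V] (Φ : V →+ V) (n : ℕ) (v : V) :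
    Φ^[n] v - v ∈ (Φ - AddMonoidHom.id V).range := by
  induction n with
  | zero => simp
  | succ n ih =>
    rw [iterate_succ_apply', ← sub_add_sub_cancel _ (Φ^[n] v) v]
    exact add_mem ⟨_, rfl⟩ ih

variable {V : Type*} [AddCommGroup V]

section DivisionRing

variable {F : Type*} [DivisionRing F] [Module F V] [FiniteDimensional F V]

theorem exists_sum_smul_iterate_eq_zero (f : V → V) (y : V) :
    ∃ (n : ℕ) (c : Fin n → F), c ≠ 0 ∧ ∑ i, c i • f^[i] y = 0 := by
  have hdep : ¬ LinearIndependent F fun i : Fin (Module.finrank F V + 1) ↦ f^[i] y := fun h ↦ by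
    simpa using h.fintype_card_le_finrank
  obtain ⟨c, hc, hne⟩ := Fintype.not_linearIndependent_iff.mp hdep
  exact ⟨_, c, ne_iff.mpr hne, hc⟩

theorem surjective_of_injective_semilinear {σ : F →+* F} [RingHomSurjective σ]
    (Φ : V →ₛₗ[σ] V) (hΦ : Injective Φ) : Surjective Φ := by
  let e : V ≃+ LinearMap.range Φ :=
    .ofBijective Φ.rangeRestrict ⟨Φ.injective_rangeRestrict_iff.mpr hΦ, Φ.surjective_rangeRestrict⟩
  have hrank : Module.finrank F V = Module.finrank F (LinearMap.range Φ) :=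
    congrArg Cardinal.toNat <| rank_eq_of_equiv_equiv σ e
      ⟨σ.injective, RingHomSurjective.is_surjective⟩ (map_smulₛₗ Φ.rangeRestrict)
  exact LinearMap.range_eq_top.mp (Submodule.eq_top_of_finrank_eq hrank.symm)

end DivisionRing

theorem IsLinearDifferenceClosed.surjective_semilinear_sub_id {F : Type*} [Field F] [Module F V]
    [FiniteDimensional F V] {σ σ' : F →+* F} [RingHomInvPair σ σ']
    (hσ : IsLinearDifferenceClosed σ) (ψ : V →ₛₗ[σ'] V) :
    Surjective (ψ.toAddMonoidHom - AddMonoidHom.id V) := by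
  intro y
  obtain ⟨n, c, hc, hcy⟩ := exists_sum_smul_iterate_eq_zero (F := F) ψ y
  have hσσ' (i : ℕ) : LeftInverse σ'^[i] σ^[i] :=
    LeftInverse.iterate (fun _ ↦ RingHomInvPair.comp_apply_eq) i
  obtain ⟨j, hj⟩ := ne_iff.mp hc
  have hcσ : σ^[j] (c j) ≠ 0 := fun h ↦
    hj <| σ.injective.iterate j <| h.trans (iterate_map_zero σ j).symm
  obtain ⟨w, hw⟩ := hσ (fun i ↦ σ^[i] (c i)) (ne_iff.mpr ⟨j, hcσ⟩) 1
  have hψ (i : Fin n) : ψ^[i] ((σ^[i] (c i) * σ^[i] w) • y) = w • c i • ψ^[i] y := by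
    rw [iterate_map_smul_semilinear, ← iterate_map_mul, hσσ', smul_smul, mul_comm]
  have hsum : ∑ i : Fin n, (ψ^[i] ((σ^[i] (c i) * σ^[i] w) • y) - (σ^[i] (c i) * σ^[i] w) • y) =
      -y := by
    rw [Finset.sum_sub_distrib, Finset.sum_congr rfl fun i _ ↦ hψ i, ← Finset.smul_sum, hcy,
      smul_zero, ← Finset.sum_smul, zero_sub, neg_inj]
    exact (congrArg (· • y) hw).trans (one_smul F y)
  have hmem := sum_mem fun (i : Fin n) (_ : i ∈ Finset.univ) ↦
    iterate_sub_mem_range_sub_id ψ.toAddMonoidHom i ((σ^[i] (c i) * σ^[i] w) • y)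
  exact neg_mem_iff.mp (hsum ▸ hmem)

end Semilinear

section Splitting

variable {F : Type*} [Field F] {σ σ' : F →+* F} [RingHomInvPair σ σ'] [RingHomInvPair σ' σ]

/-- The `σ⁻¹`-semilinear operator `f ↦ φ⁻¹ ∘ f ∘ Φ` on `Hom (M, N)`, whose fixed points are the
linear maps intertwining `Φ` and `φ`.  The other conjugation `f ↦ φ ∘ f ∘ Φ⁻¹` would require `Φ`
to be bijective. -/
def homTwist {M N : Type*} [AddCommGroup M] [Module F M] [AddCommGroup N] [Module F N]
    (φ : N ≃ₛₗ[σ] N) (Φ : M →ₛₗ[σ] M) : (M →ₗ[F] N) →ₛₗ[σ'] (M →ₗ[F] N) where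
  toFun f := (φ.symm : N →ₛₗ[σ'] N).comp (f.comp Φ)
  map_add' f g := by ext; simp
  map_smul' c f := by ext; simp [map_smulₛₗ]

variable {E : Type*} [AddCommGroup E] [Module F E] [FiniteDimensional F E]

theorem exists_intertwining_projection (hσ : IsLinearDifferenceClosed σ) (Φ : E →ₛₗ[σ] E)
    {D : Submodule F E} (φ : D ≃ₛₗ[σ] D) (hφ : ∀ x : D, (φ x : E) = Φ x) :
    ∃ g : E →ₗ[F] D, (∀ x : D, g x = x) ∧ ∀ v, g (Φ v) = φ (g v) := by
  obtain ⟨π, hπ⟩ := D.subtype.exists_leftInverse_of_injective D.ker_subtype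
  replace hπ (x : D) : π x = x := LinearMap.congr_fun hπ x
  have hD : D ≤ D.comap Φ := fun x hx ↦ by
    simpa only [Submodule.mem_comap, ← hφ ⟨x, hx⟩] using (φ ⟨x, hx⟩).2
  have hδ : D ≤ LinearMap.ker (homTwist φ Φ π - π) := fun x hx ↦ by
    have : π (Φ x) = φ ⟨x, hx⟩ := by rw [← hπ (φ ⟨x, hx⟩), hφ]
    simp [homTwist, this, hπ ⟨x, hx⟩]
  obtain ⟨h, hh⟩ := hσ.surjective_semilinear_sub_id (homTwist φ (D.mapQ D Φ hD))
    (D.liftQ _ hδ)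
  have hhv (v : E) : φ.symm (h (D.mkQ (Φ v))) - h (D.mkQ v) = φ.symm (π (Φ v)) - π v :=
    LinearMap.congr_fun hh (D.mkQ v)
  refine ⟨π - h ∘ₗ D.mkQ, fun x ↦ ?_, fun v ↦ φ.symm.injective ?_⟩
  · simp [hπ, (Submodule.Quotient.mk_eq_zero D).mpr x.2]
  · simp only [LinearMap.sub_apply, LinearMap.comp_apply, map_sub, LinearEquiv.symm_apply_apply]
    exact sub_eq_sub_iff_sub_eq_sub.mpr (hhv v).symm

end Splitting

theorem phi_module_stable_complement_general {F : Type*} [Field F] {σ : F →+* F}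
    (hσ : IsLinearDifferenceClosed σ) {E : Type*} [AddCommGroup E] [Module F E]
    [FiniteDimensional F E] (Φ : E →ₛₗ[σ] E) (D : Submodule F E) (hD : ∀ v ∈ D, Φ v ∈ D)
    (hΦ : Set.InjOn Φ D) :
    ∃ D' : Submodule F E, (∀ v ∈ D', Φ v ∈ D') ∧ IsCompl D D' := by
  let τ : F ≃+* F := .ofBijective σ ⟨σ.injective, hσ.surjective⟩
  have : RingHomInvPair σ τ.symm := .of_ringEquiv τ
  have : RingHomInvPair (τ.symm : F →+* F) σ := .of_ringEquiv τ.symm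
  have hinj : Injective (Φ.restrict hD) := fun x y hxy ↦
    Subtype.ext (hΦ x.2 y.2 (congrArg Subtype.val hxy))
  let φ : D ≃ₛₗ[σ] D :=
    .ofBijective (Φ.restrict hD) ⟨hinj, surjective_of_injective_semilinear _ hinj⟩
  obtain ⟨g, hgD, hgΦ⟩ := exists_intertwining_projection hσ Φ φ fun _ ↦ rfl
  refine ⟨LinearMap.ker g, fun v hv ↦ ?_, LinearMap.isCompl_of_proj hgD⟩
  rw [LinearMap.mem_ker, hgΦ, LinearMap.mem_ker.mp hv, map_zero]

/-- **Semisimplicity of `φ`-modules over an algebraically closed residue field.**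
If `k` is algebraically closed of characteristic `p`, `F = FractionRing (𝕎 k)`, `σ` the
automorphism of `F` induced by the Witt vector Frobenius, `E` a finite-dimensional
`F`-vector space with an additive bijection `Φ` satisfying `Φ (c • v) = σ c • Φ v`, then
every `Φ`-stable subspace `D ⊆ E` admits a `Φ`-stable complement. -/
theorem phi_module_stable_complement
    (p : ℕ) [Fact p.Prime] (k : Type*) [Field k] [CharP k p] [IsAlgClosed k]
    (σ : FractionRing (WittVector p k) ≃+* FractionRing (WittVector p k))
    (hσ : σ = WittVector.FractionRing.frobenius p k)
    (E : Type*) [AddCommGroup E] [Module (FractionRing (WittVector p k)) E]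
    [FiniteDimensional (FractionRing (WittVector p k)) E]
    (Φ : E ≃+ E)
    (hΦ : ∀ (c : FractionRing (WittVector p k)) (v : E), Φ (c • v) = σ c • Φ v)
    (D : Submodule (FractionRing (WittVector p k)) E)
    (hD : ∀ v ∈ D, Φ v ∈ D) :
    ∃ D' : Submodule (FractionRing (WittVector p k)) E,
      (∀ v ∈ D', Φ v ∈ D') ∧ D ⊓ D' = ⊥ ∧ D ⊔ D' = ⊤ := by
  subst hσ
  obtain ⟨D', hD', hDD'⟩ := phi_module_stable_complement_general
    (isLinearDifferenceClosed_frobenius_of_isAlgClosed k p).fractionRing_wittVector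
    { Φ with map_smul' := hΦ } D hD Φ.injective.injOn
  exact ⟨D', hD', hDD'.inf_eq_bot, hDD'.sup_eq_top⟩
end

section
/- Let p be a prime, k a perfect field of characteristic p, F = FractionRing(𝕎 k), and σ : F ≃+* F the automorphism induced by the Witt vector Frobenius. Then for every nonzero integer m, the only element c ∈ F satisfying p^m • σ(c) = c is c = 0. -/
open WittVector

/-! A valuation `v` with `v ∘ σ = v` cancels `c` from `a ^ m * σ c = c`, leaving `v a ^ m = 1`,
which forces `v a = 1` because value groups are torsion-free. The Frobenius of `FractionRing (𝕎 k)`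
preserves the `p`-adic valuation: every nonzero element is a unit of `𝕎 k` times a power of `p`,
and the Frobenius maps units of `𝕎 k` to units and fixes `p`. -/

theorem eq_zero_of_zpow_mul_map_eq_self {K Γ₀ : Type*} [DivisionRing K]
    [LinearOrderedCommGroupWithZero Γ₀] {v : Valuation K Γ₀} {σ : K → K}
    (hσ : ∀ x, v (σ x) = v x) {a : K} (ha : v a ≠ 1) {m : ℤ} (hm : m ≠ 0) {c : K}
    (h : a ^ m * σ c = c) : c = 0 := by
  by_contra hc
  have hvc : v a ^ m * v c = v c := by rw [← hσ c, ← map_zpow₀, ← map_mul, h, hσ]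
  have hva : v a ^ m = 1 := (mul_eq_right₀ (v.ne_zero_iff.mpr hc)).mp hvc
  exact hm ((zpow_eq_one_iff_right₀ zero_le ha).mp hva)

theorem heightOneSpectrum_valuation_algebraMap_unit {R K : Type*} [CommRing R]
    [IsDedekindDomain R] [Field K] [Algebra R K] [IsFractionRing R K]
    (v : IsDedekindDomain.HeightOneSpectrum R) (u : Rˣ) :
    v.valuation K (algebraMap R K u) = 1 :=
  v.valuation_eq_one_iff_notMem.mpr fun hu ↦
    v.isPrime.ne_top (Ideal.eq_top_of_isUnit_mem _ hu u.isUnit)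

section DiscreteValuationRing

variable {R K : Type*} [CommRing R] [IsDomain R] [IsDiscreteValuationRing R]
  [Field K] [Algebra R K] [IsFractionRing R K]

theorem maximalIdeal_valuation_algebraMap_of_irreducible {ϖ : R} (hϖ : Irreducible ϖ) :
    (IsDiscreteValuationRing.maximalIdeal R).valuation K (algebraMap R K ϖ) =
      WithZero.exp (-1 : ℤ) := by
  rw [IsDedekindDomain.HeightOneSpectrum.valuation_of_algebraMap]
  exact IsDedekindDomain.HeightOneSpectrum.intValuation_singleton _ hϖ.ne_zero hϖ.maximalIdeal_eq

theorem maximalIdeal_valuation_map_eq {S L : Type*} [CommRing S] [IsDomain S]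
    [IsDiscreteValuationRing S] [Field L] [Algebra S L] [IsFractionRing S L]
    {e : R →+* S} {σ : K →+* L} (hσ : ∀ r, σ (algebraMap R K r) = algebraMap S L (e r))
    {ϖ : R} (hϖ : Irreducible ϖ) (heϖ : Irreducible (e ϖ)) (x : K) :
    (IsDiscreteValuationRing.maximalIdeal S).valuation L (σ x) =
      (IsDiscreteValuationRing.maximalIdeal R).valuation K x := by
  obtain rfl | hx := eq_or_ne x 0
  · simp only [map_zero]
  obtain ⟨n, u, rfl⟩ := IsDiscreteValuationRing.exists_units_eq_smul_zpow_of_irreducible hϖ hx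
  have hσu : σ (algebraMap R K u) = algebraMap S L (Units.map (e : R →* S) u) := hσ u
  simp only [Units.smul_def, Algebra.smul_def, map_mul, map_zpow₀, hσu, hσ ϖ,
    heightOneSpectrum_valuation_algebraMap_unit,
    maximalIdeal_valuation_algebraMap_of_irreducible hϖ,
    maximalIdeal_valuation_algebraMap_of_irreducible heϖ]

theorem frobenius_no_nonzero_integral_slope_fixed_vector_general {e : R →+* R} {σ : K →+* K}
    (hσ : ∀ r, σ (algebraMap R K r) = algebraMap R K (e r))
    {ϖ : R} (hϖ : Irreducible ϖ) (heϖ : Irreducible (e ϖ)) {m : ℤ} (hm : m ≠ 0) {c : K}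
    (h : algebraMap R K ϖ ^ m * σ c = c) : c = 0 := by
  refine eq_zero_of_zpow_mul_map_eq_self (maximalIdeal_valuation_map_eq hσ hϖ heϖ) ?_ hm h
  rw [maximalIdeal_valuation_algebraMap_of_irreducible hϖ, ne_eq, WithZero.exp_eq_one]
  decide

end DiscreteValuationRing

theorem fractionRing_frobenius_algebraMap (p : ℕ) [Fact p.Prime] {k : Type*} [CommRing k]
    [IsDomain k] [CharP k p] [PerfectRing k p] (x : WittVector p k) :
    WittVector.FractionRing.frobenius p k (algebraMap _ _ x) =
      algebraMap _ _ (WittVector.frobenius x) :=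
  IsFractionRing.ringEquivOfRingEquiv_algebraMap (frobeniusEquiv p k) x

/-- For a perfect field `k` of characteristic `p`, `F = FractionRing (𝕎 k)` and `σ` the
automorphism of `F` induced by the Witt vector Frobenius, the only solution `c ∈ F` of
`p ^ m * σ c = c` with `m` a nonzero integer is `c = 0`. -/
theorem frobenius_no_nonzero_integral_slope_fixed_vector
    (p : ℕ) [Fact p.Prime] (k : Type*) [Field k] [CharP k p] [PerfectRing k p]
    (σ : FractionRing (WittVector p k) ≃+* FractionRing (WittVector p k))
    (hσ : σ = WittVector.FractionRing.frobenius p k) :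
    ∀ m : ℤ, m ≠ 0 → ∀ c : FractionRing (WittVector p k),
      (p : FractionRing (WittVector p k)) ^ m * σ c = c → c = 0 := by
  subst hσ
  exact fun m hm c h ↦ frobenius_no_nonzero_integral_slope_fixed_vector_general
    (σ := WittVector.FractionRing.frobeniusRingHom p k)
    (fractionRing_frobenius_algebraMap p) (WittVector.irreducible p)
    (by rw [map_natCast]; exact WittVector.irreducible p) hm (by rwa [map_natCast])
end

section
/- Let p be a prime, k a perfect field of characteristic p, F = FractionRing(𝕎 k), and σ : F ≃+* F the automorphism induced by the Witt vector Frobenius. Let E be a finite-dimensional F-vector space, Φ : E → E an additive map satisfying Φ(c • v) = σ(c) • Φ(v) for all c ∈ F, v ∈ E, and N : E → E an F-linear map satisfying N ∘ Φ = p • (Φ ∘ N). Suppose D ⊆ E is an F-subspace with Φ(D) ⊆ D such that: (i) the quotient E/D is one-dimensional and is spanned by a vector fixed by the map induced by Φ on E/D; and (ii) the only v ∈ D with p • Φ(v) = v is v = 0. Then every e ∈ E with Φ(e) = e satisfies N(e) = 0. -/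
open WittVector

/-!
The relation `N ∘ Φ = p • (Φ ∘ N)` sends a `Φ`-fixed vector to a vector `w` with `p • Φ w = w`.
In `E ⧸ D`, which has a basis of `Φ`-fixed vectors, the coordinates `c` of the image of `w` satisfy
`p * σ c = c`. Since `σ` preserves the `p`-adic valuation and multiplication by `p` raises it,
`c = 0`. Hence `w ∈ D`, where the slope hypothesis gives `w = 0`.
-/

theorem eq_zero_of_prime_mul_mulEquiv_mul_eq {A : Type*} [CommMonoidWithZero A] [IsCancelMulZero A]
    [WfDvdMonoid A] {ϖ : A} (hϖ : Prime ϖ) {f : A ≃* A} (hf : f ϖ = ϖ) {a b : A} (hb : b ≠ 0)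
    (hab : ϖ * f a * b = a * f b) : a = 0 := by
  by_contra ha
  have hfin : FiniteMultiplicity ϖ (a * b) :=
    .of_prime_left hϖ (mul_ne_zero ha hb)
  have hmap (x : A) : emultiplicity ϖ (f x) = emultiplicity ϖ x := by
    simpa only [hf] using emultiplicity_map_eq f (a := ϖ) (b := x)
  have hself : emultiplicity ϖ ϖ = 1 :=
    (FiniteMultiplicity.of_prime_left hϖ hϖ.ne_zero).emultiplicity_self
  have hsucc : 1 + emultiplicity ϖ (a * b) = emultiplicity ϖ (a * b) := by
    simpa only [emultiplicity_mul hϖ, hself, hmap, add_assoc] using congrArg (emultiplicity ϖ) hab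
  rw [hfin.emultiplicity_eq_multiplicity] at hsucc
  norm_cast at hsucc
  lia

theorem eq_zero_of_prime_mul_ringEquivOfRingEquiv_eq_self {A K : Type*} [CommRing A] [IsDomain A]
    [WfDvdMonoid A] [Field K] [Algebra A K] [IsFractionRing A K] {ϖ : A} (hϖ : Prime ϖ)
    {f : A ≃+* A} (hf : f ϖ = ϖ) {c : K}
    (hc : algebraMap A K ϖ * IsFractionRing.ringEquivOfRingEquiv f c = c) : c = 0 := by
  obtain ⟨a, b, hb, rfl⟩ := IsFractionRing.div_surjective (A := A) c
  have hb0 : b ≠ 0 := nonZeroDivisors.ne_zero hb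
  have hbK : algebraMap A K b ≠ 0 := by simpa using hb0
  have hfbK : algebraMap A K (f b) ≠ 0 := by simpa using hb0
  have hab : ϖ * f a * b = a * f b := by
    apply IsFractionRing.injective A K
    rw [map_div₀, IsFractionRing.ringEquivOfRingEquiv_algebraMap,
      IsFractionRing.ringEquivOfRingEquiv_algebraMap, ← mul_div_assoc,
      div_eq_div_iff hfbK hbK] at hc
    simpa only [map_mul] using hc
  rw [eq_zero_of_prime_mul_mulEquiv_mul_eq (f := f.toMulEquiv) hϖ hf hb0 hab, map_zero, zero_div]

theorem eq_zero_of_p_mul_wittVector_frobenius_eq_self (p : ℕ) [Fact p.Prime] (k : Type*) [Field k]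
    [CharP k p] [PerfectRing k p] {c : FractionRing (WittVector p k)}
    (hc : p * WittVector.FractionRing.frobenius p k c = c) : c = 0 :=
  eq_zero_of_prime_mul_ringEquivOfRingEquiv_eq_self (WittVector.irreducible p).prime
    (map_natCast (WittVector.frobeniusEquiv p k) p) (by rwa [map_natCast])

theorem repr_semilinearMap_apply_of_isFixedPt {ι R M : Type*} [Semiring R] [AddCommMonoid M]
    [Module R M] {σ : R →+* R} (b : Module.Basis ι R M) (φ : M →ₛₗ[σ] M)
    (hb : ∀ i, Function.IsFixedPt φ (b i)) (x : M) (i : ι) :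
    b.repr (φ x) i = σ (b.repr x i) := by
  have hcoord : (b.coord i).comp φ = σ.toSemilinearMap.comp (b.coord i) :=
    b.ext fun j => by
      classical
      simp [(hb j).eq, Finsupp.single_apply, apply_ite σ]
  exact LinearMap.congr_fun hcoord x

theorem eq_zero_of_smul_apply_eq_self_of_quotient {R E : Type*} [Ring R] [AddCommGroup E]
    [Module R E] {σ : R →+* R} {Φ : E →ₛₗ[σ] E} {D : Submodule R E} (hD : D ≤ D.comap Φ) {q : R}
    (hquot : ∀ x : E ⧸ D, q • D.mapQ D Φ hD x = x → x = 0)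
    (hsub : ∀ v ∈ D, q • Φ v = v → v = 0) {v : E} (hv : q • Φ v = v) : v = 0 := by
  have hmk : q • D.mapQ D Φ hD (D.mkQ v) = D.mkQ v := by
    rw [Submodule.mkQ_apply, Submodule.mapQ_apply, ← Submodule.Quotient.mk_smul, hv]
  exact hsub v ((Submodule.Quotient.mk_eq_zero D).1 (hquot _ hmk)) hv

section DivisionRing

variable {K : Type*} [DivisionRing K] {σ : K →+* K}

theorem eq_zero_of_smul_apply_eq_self_of_span_fixedPoints {M : Type*} [AddCommGroup M] [Module K M]
    {φ : M →ₛₗ[σ] M} (hφ : Submodule.span K (Function.fixedPoints φ) = ⊤)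
    {q : K} (hq : ∀ c, q * σ c = c → c = 0) {x : M} (hx : q • φ x = x) : x = 0 := by
  let b := Module.Basis.ofSpan hφ.ge
  have hb : ∀ i, Function.IsFixedPt φ (b i) := fun i =>
    Module.Basis.ofSpan_subset hφ.ge (Set.mem_range_self i)
  refine b.ext_elem fun i => ?_
  have hi : q * σ (b.repr x i) = b.repr x i := by
    rw [← repr_semilinearMap_apply_of_isFixedPt b φ hb]
    simpa using congrArg (b.repr · i) hx
  simpa using hq _ hi

variable {E : Type*} [AddCommGroup E] [Module K E] {Φ : E →ₛₗ[σ] E} {D : Submodule K E}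

theorem span_fixedPoints_mapQ_eq_top_of_finrank_eq_one (hD : D ≤ D.comap Φ)
    (hquot : Module.finrank K (E ⧸ D) = 1) {v : E} (hv : v ∉ D) (hΦv : Φ v - v ∈ D) :
    Submodule.span K (Function.fixedPoints (D.mapQ D Φ hD)) = ⊤ := by
  have hmk_ne : D.mkQ v ≠ 0 := mt (Submodule.Quotient.mk_eq_zero D).1 hv
  have hmk_fixed : D.mapQ D Φ hD (D.mkQ v) = D.mkQ v := (Submodule.Quotient.eq D).2 hΦv
  rw [eq_top_iff, ← (finrank_eq_one_iff_of_nonzero _ hmk_ne).1 hquot]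
  exact Submodule.span_mono (Set.singleton_subset_iff.2 hmk_fixed)

theorem monodromy_kills_frobenius_fixed_vectors_general {q : K} (hq : ∀ c, q * σ c = c → c = 0)
    {N : E → E} (hN : ∀ v, N (Φ v) = q • Φ (N v)) (hD : D ≤ D.comap Φ)
    (hspan : Submodule.span K (Function.fixedPoints (D.mapQ D Φ hD)) = ⊤)
    (hslope : ∀ v ∈ D, q • Φ v = v → v = 0) {e : E} (he : Φ e = e) : N e = 0 := by
  have hNe : q • Φ (N e) = N e := by rw [← hN, he]
  exact eq_zero_of_smul_apply_eq_self_of_quotient hD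
    (fun _ => eq_zero_of_smul_apply_eq_self_of_span_fixedPoints hspan hq) hslope hNe

end DivisionRing

/-- Key linear-algebra step in Theorem 3.1(2): for a perfect field `k` of characteristic
`p`, `F = FractionRing (𝕎 k)`, `σ` induced by the Witt vector Frobenius, `E` a
finite-dimensional `F`-vector space with a `σ`-semilinear additive map `Φ` and an
`F`-linear monodromy operator `N` with `N ∘ Φ = p • (Φ ∘ N)`: if `D ⊆ E` is a `Φ`-stable
subspace with one-dimensional quotient spanned by a `Φ`-fixed vector, and `D` contains no
nonzero `v` with `p • Φ v = v`, then `N` kills every `Φ`-fixed vector of `E`. -/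
theorem monodromy_kills_frobenius_fixed_vectors
    (p : ℕ) [Fact p.Prime] (k : Type*) [Field k] [CharP k p] [PerfectRing k p]
    (σ : FractionRing (WittVector p k) ≃+* FractionRing (WittVector p k))
    (hσ : σ = WittVector.FractionRing.frobenius p k)
    (E : Type*) [AddCommGroup E] [Module (FractionRing (WittVector p k)) E]
    [FiniteDimensional (FractionRing (WittVector p k)) E]
    (Φ : E →+ E)
    (hΦ : ∀ (c : FractionRing (WittVector p k)) (v : E), Φ (c • v) = σ c • Φ v)
    (N : E →ₗ[FractionRing (WittVector p k)] E)
    (hN : ∀ v : E, N (Φ v) = (p : FractionRing (WittVector p k)) • Φ (N v))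
    (D : Submodule (FractionRing (WittVector p k)) E)
    (hD : ∀ v ∈ D, Φ v ∈ D)
    (hquot : Module.finrank (FractionRing (WittVector p k)) (E ⧸ D) = 1)
    (hspan : ∃ v : E, v ∉ D ∧ Φ v - v ∈ D)
    (hslope : ∀ v ∈ D, (p : FractionRing (WittVector p k)) • Φ v = v → v = 0) :
    ∀ e : E, Φ e = e → N e = 0 := by
  subst hσ
  obtain ⟨v, hv, hΦv⟩ := hspan
  let Ψ : E →ₛₗ[WittVector.FractionRing.frobeniusRingHom p k] E := { Φ with map_smul' := hΦ }
  intro e he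
  exact monodromy_kills_frobenius_fixed_vectors_general (Φ := Ψ)
    (fun _ => eq_zero_of_p_mul_wittVector_frobenius_eq_self p k) hN hD
    (span_fixedPoints_mapQ_eq_top_of_finrank_eq_one hD hquot hv hΦv) hslope he
end

section
/- Let L/K be an algebraic extension of fields, let γ be a K-algebra automorphism of L, and let c ∈ K be an element that is not a root of unity (i.e. c^n ≠ 1 for every integer n ≥ 1). Then the map L → L sending x to c·γ(x) − x is a bijection. -/
/-!
Let `S` be a domain algebraic over a subring `R`. An `R`-algebra endomorphism `f` of `S` is
injective, since a nonzero ideal of `S` meets `R` nontrivially, so it permutes the finitely many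
roots in `S` of a nonzero polynomial over `R`. Hence every `x` satisfies `f^n x = x` for some
`n ≥ 1`, and `T = c • f` satisfies `T^n x = c^n • x`. In the geometric sum identity
`(T - 1) (1 + T + ⋯ + T^(n - 1)) = T^n - 1` the right-hand side then acts on `x` as the invertible
scalar `c^n - 1`. As `n` depends on `x`, this inverts `T - 1` one vector at a time.
-/

open Function

theorem sub_one_bijective_of_forall_pow_apply_eq_smul {R M : Type*} [Ring R] [AddCommGroup M]
    [Module R M] (T : Module.End R M)
    (hT : ∀ x, ∃ n : ℕ, ∃ a : R, IsUnit (a - 1) ∧ (T ^ n) x = a • x) :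
    Bijective (T - 1 : Module.End R M) := by
  have pow_sub_one_apply {n : ℕ} {a : R} {x : M} (h : (T ^ n) x = a • x) :
      (T ^ n - 1) x = (a - 1) • x := by
    rw [LinearMap.sub_apply, Module.End.one_apply, h, sub_smul, one_smul]
  constructor
  · refine (injective_iff_map_eq_zero (T - 1)).2 fun x hx ↦ ?_
    obtain ⟨n, a, ha, hax⟩ := hT x
    refine ha.smul_eq_zero.1 ?_
    calc (a - 1) • x = ((∑ i ∈ Finset.range n, T ^ i) * (T - 1)) x := by
          rw [geom_sum_mul, pow_sub_one_apply hax]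
      _ = 0 := by rw [Module.End.mul_apply, hx, map_zero]
  · intro y
    obtain ⟨n, a, ⟨u, hu⟩, hay⟩ := hT y
    refine ⟨u⁻¹ • (∑ i ∈ Finset.range n, T ^ i) y, ?_⟩
    calc (T - 1) (u⁻¹ • (∑ i ∈ Finset.range n, T ^ i) y)
        = u⁻¹ • ((T - 1) * ∑ i ∈ Finset.range n, T ^ i) y := by
          rw [LinearMap.map_smul_of_tower, Module.End.mul_apply]
      _ = u⁻¹ • (u • y) := by rw [mul_geom_sum, pow_sub_one_apply hay, ← hu, Units.smul_def u]
      _ = y := inv_smul_smul u y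

theorem smul_apply_sub_bijective_of_forall_mem_periodicPts {R M : Type*} [CommRing R]
    [AddCommGroup M] [Module R M] (T : Module.End R M) (hT : ∀ x, x ∈ periodicPts T) {c : R}
    (hc : ∀ n : ℕ, 1 ≤ n → IsUnit (c ^ n - 1)) :
    Bijective fun x ↦ c • T x - x := by
  refine sub_one_bijective_of_forall_pow_apply_eq_smul (c • T) fun x ↦ ?_
  obtain ⟨n, hn, hx⟩ := hT x
  refine ⟨n, c ^ n, hc n hn, ?_⟩
  rw [smul_pow, LinearMap.smul_apply, Module.End.pow_apply, hx.eq]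

theorem algHom_injective_of_isAlgebraic {R S A : Type*} [CommRing R] [CommRing S] [IsDomain S]
    [Algebra R S] [Algebra.IsAlgebraic R S] [Semiring A] [Algebra R A] [FaithfulSMul R A]
    (f : S →ₐ[R] A) : Injective f := by
  refine (injective_iff_map_eq_zero f).2 fun x hx ↦ by_contra fun hx0 ↦ ?_
  refine Ideal.comap_ne_bot_of_algebraic_mem (I := RingHom.ker f) hx0 hx
    (Algebra.IsAlgebraic.isAlgebraic (R := R) x) (eq_bot_iff.2 fun r hr ↦ ?_)
  have hr0 : algebraMap R A r = 0 := by
    rw [← f.commutes]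
    exact hr
  exact (FaithfulSMul.algebraMap_eq_zero_iff R A).1 hr0

section

variable {R S : Type*} [CommRing R] [CommRing S] [IsDomain S] [Algebra R S] [FaithfulSMul R S]

theorem mem_periodicPts_of_isAlgebraic (f : S →ₐ[R] S) (hf : Injective f) {x : S}
    (hx : IsAlgebraic R x) : x ∈ periodicPts f := by
  obtain ⟨p, hp, hpx⟩ := hx
  have hmaps : Set.MapsTo f (p.rootSet S) (p.rootSet S) := Polynomial.rootSet_maps_to' id f
  have hmem : x ∈ p.rootSet S :=
    (Polynomial.mem_rootSet_of_injective (FaithfulSMul.algebraMap_injective R S) hp).2 hpx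
  obtain ⟨n, hn, hperiod⟩ := (hmaps.restrict_inj.2 hf.injOn).mem_periodicPts ⟨x, hmem⟩
  refine mk_mem_periodicPts hn ?_
  rw [IsPeriodicPt, IsFixedPt, ← hmaps.coe_iterate_restrict ⟨x, hmem⟩, hperiod.eq]

theorem twisted_automorphism_sub_one_bijective_general [Algebra.IsAlgebraic R S]
    (f : S →ₐ[R] S) {c : R} (hc : ∀ n : ℕ, 1 ≤ n → IsUnit (c ^ n - 1)) :
    Bijective fun x ↦ c • f x - x :=
  smul_apply_sub_bijective_of_forall_mem_periodicPts f.toLinearMap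
    (fun x ↦ mem_periodicPts_of_isAlgebraic f (algHom_injective_of_isAlgebraic f)
      (Algebra.IsAlgebraic.isAlgebraic x)) hc

end

/-- Twisted-automorphism lemma: if `L/K` is an algebraic extension of fields, `γ` a
`K`-algebra automorphism of `L`, and `c ∈ K` is not a root of unity, then the map
`x ↦ c • γ x - x` is a bijection of `L`. -/
theorem twisted_automorphism_sub_one_bijective
    (K L : Type*) [Field K] [Field L] [Algebra K L] [Algebra.IsAlgebraic K L]
    (γ : L ≃ₐ[K] L) (c : K) (hc : ∀ n : ℕ, 1 ≤ n → c ^ n ≠ 1) :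
    Function.Bijective (fun x : L => c • γ x - x) :=
  twisted_automorphism_sub_one_bijective_general (γ : L →ₐ[K] L) fun n hn ↦
    (sub_ne_zero.2 (hc n hn)).isUnit
end
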